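/- Let Ω₁, Ω₂ be open subsets of ℝⁿ and let f ∈ BV_loc(Ω₁, Ω₂) have no jump part. Suppose the operator T_f(u) = u∘f maps functions from C_c^∞(Ω₂) into BV_loc(Ω₁) and there is a constant K such that |D(u∘f)|(Ω₁) ≤ K·|Du|(Ω₂) for all u ∈ C_c^∞(Ω₂). Then |Df|(f̃⁻¹(A)) ≤ 16nK·Lⁿ(A) for all Borel sets A ⊆ Ω₂. -/

import Mathlib

open MeasureTheory Metric Set Filter
open scoped ENNReal Topology NNReal

noncomputable section

/-- `ℝⁿ` as a Euclidean space. -/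
abbrev En (n : ℕ) : Type := EuclideanSpace ℝ (Fin n)

/-- A smooth test function compactly supported inside the set `Ω`. -/
def SmoothTest {n : ℕ} (Ω : Set (En n)) (φ : En n → ℝ) : Prop :=
  ContDiff ℝ (⊤ : ℕ∞) φ ∧ HasCompactSupport φ ∧ tsupport φ ⊆ Ω

/-- Frobenius norm of an `m × n` array of reals. -/
def frobNorm {m n : ℕ} (M : Fin m → Fin n → ℝ) : ℝ :=
  Real.sqrt (∑ j, ∑ i, M j i ^ 2)

/-- `Df = σ ⬝ ν` is the polar decomposition of the distributional derivative of the
mapping `f : Ω → ℝᵐ`: `σ` is a matrix field of unit Frobenius norm `ν`-a.e., `ν` is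
carried by `Ω`, and the integration-by-parts formula holds against all smooth test
functions compactly supported in `Ω`.  In particular `ν = |Df|` is the total variation
measure of `Df` on `Ω`. -/
def IsVariationMeasure {n m : ℕ} (Ω : Set (En n)) (f : En n → En m)
    (σ : En n → Fin m → Fin n → ℝ) (ν : Measure (En n)) : Prop :=
  Measurable σ ∧ (∀ᵐ x ∂ν, frobNorm (σ x) = 1) ∧ ν Ωᶜ = 0 ∧
    ∀ φ : En n → ℝ, SmoothTest Ω φ → ∀ (j : Fin m) (i : Fin n),
      ∫ x in Ω, f x j * fderiv ℝ φ x (EuclideanSpace.single i 1) ∂volume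
        = - ∫ x, φ x * σ x j i ∂ν

/-- `f ∈ BV(Ω, ℝᵐ)` with total variation measure `ν`. -/
def MemBV {n m : ℕ} (Ω : Set (En n)) (f : En n → En m) (ν : Measure (En n)) : Prop :=
  IntegrableOn f Ω volume ∧ ν Ω < ⊤ ∧ ∃ σ, IsVariationMeasure Ω f σ ν

/-- `f ∈ BV_loc(Ω, ℝᵐ)` with total variation measure `ν`, finite on compact subsets of `Ω`. -/
def MemBVloc {n m : ℕ} (Ω : Set (En n)) (f : En n → En m) (ν : Measure (En n)) : Prop :=
  LocallyIntegrableOn f Ω volume ∧ (∀ C : Set (En n), IsCompact C → C ⊆ Ω → ν C < ⊤) ∧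
    ∃ σ, IsVariationMeasure Ω f σ ν

/-- Scalar version of `IsVariationMeasure`: `Du = σ ⬝ ν` with `|σ| = 1` `ν`-a.e. -/
def IsVariationMeasureS {n : ℕ} (Ω : Set (En n)) (u : En n → ℝ)
    (σ : En n → Fin n → ℝ) (ν : Measure (En n)) : Prop :=
  Measurable σ ∧ (∀ᵐ x ∂ν, Real.sqrt (∑ i, σ x i ^ 2) = 1) ∧ ν Ωᶜ = 0 ∧
    ∀ φ : En n → ℝ, SmoothTest Ω φ → ∀ i : Fin n,
      ∫ x in Ω, u x * fderiv ℝ φ x (EuclideanSpace.single i 1) ∂volume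
        = - ∫ x, φ x * σ x i ∂ν

/-- `u ∈ BV(Ω)` with total variation measure `ν`. -/
def MemBVs {n : ℕ} (Ω : Set (En n)) (u : En n → ℝ) (ν : Measure (En n)) : Prop :=
  IntegrableOn u Ω volume ∧ ν Ω < ⊤ ∧ ∃ σ, IsVariationMeasureS Ω u σ ν

/-- `u ∈ BV_loc(Ω)` with total variation measure `ν`. -/
def MemBVlocs {n : ℕ} (Ω : Set (En n)) (u : En n → ℝ) (ν : Measure (En n)) : Prop :=
  LocallyIntegrableOn u Ω volume ∧ (∀ C : Set (En n), IsCompact C → C ⊆ Ω → ν C < ⊤) ∧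
    ∃ σ, IsVariationMeasureS Ω u σ ν

/-- `z` is the approximate limit of `f` at `x`. -/
def ApproxLimAt {n m : ℕ} (f : En n → En m) (x : En n) (z : En m) : Prop :=
  Tendsto (fun r : ℝ =>
      (∫ y in Metric.ball x r, ‖f y - z‖ ∂volume) / (volume (Metric.ball x r)).toReal)
    (nhdsWithin 0 (Set.Ioi 0)) (nhds 0)

/-- `f̃⁻¹(A)`: the preimage of `A` under the precise representative (approximate limit)
of `f`; a point belongs to it iff the approximate limit of `f` exists there and lies in `A`. -/
def tildePreimage {n m : ℕ} (f : En n → En m) (A : Set (En m)) : Set (En n) :=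
  {x | ∃ z ∈ A, ApproxLimAt f x z}

/-- `f` has no jump part: its variation measure does not charge the approximate
discontinuity set of `f`. -/
def NoJumpPart {n m : ℕ} (f : En n → En m) (ν : Measure (En n)) : Prop :=
  ν {x | ¬ ∃ z, ApproxLimAt f x z} = 0

/-- `f` is a homeomorphism of `Ω₁` onto `Ω₂`, with inverse `g`. -/
def IsHomeoOn {n : ℕ} (f g : En n → En n) (Ω₁ Ω₂ : Set (En n)) : Prop :=
  ContinuousOn f Ω₁ ∧ ContinuousOn g Ω₂ ∧ MapsTo f Ω₁ Ω₂ ∧ MapsTo g Ω₂ Ω₁ ∧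
    (∀ x ∈ Ω₁, g (f x) = x) ∧ (∀ y ∈ Ω₂, f (g y) = y)


open scoped Convolution ContDiff

/-- The `k`-th mollifier bump. -/
def bmp (n : ℕ) (k : ℕ) : ContDiffBump (0 : En n) where
  rIn := 1 / (2 * ((k : ℝ) + 1))
  rOut := 1 / ((k : ℝ) + 1)
  rIn_pos := by positivity
  rIn_lt_rOut := by
    apply one_div_lt_one_div_of_lt
    · positivity
    · have : (0 : ℝ) ≤ k := k.cast_nonneg
      linarith

/-- The `k`-th mollifier. -/
def rho (n : ℕ) (k : ℕ) : En n → ℝ := (bmp n k).normed volume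

/-- Radius of the `k`-th mollifier. -/
def rad (k : ℕ) : ℝ := 1 / ((k : ℝ) + 1)

lemma rad_pos (k : ℕ) : 0 < rad k := by unfold rad; positivity

lemma rad_tendsto : Tendsto rad atTop (𝓝 0) := tendsto_one_div_add_atTop_nhds_zero_nat

lemma bmp_rOut (n k : ℕ) : (bmp n k).rOut = rad k := rfl

lemma bmp_rIn (n k : ℕ) : (bmp n k).rIn = rad k / 2 := by
  show 1 / (2 * ((k : ℝ) + 1)) = 1 / ((k : ℝ) + 1) / 2
  field_simp

/-- Mollification. -/
def moll {n : ℕ} (g : En n → En n) (k : ℕ) : En n → En n :=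
  rho n k ⋆[ContinuousLinearMap.lsmul ℝ ℝ, volume] g

lemma rho_contDiff (n k : ℕ) : ContDiff ℝ ∞ (rho n k) := (bmp n k).contDiff_normed

lemma rho_compact (n k : ℕ) : HasCompactSupport (rho n k) := (bmp n k).hasCompactSupport_normed

lemma rho_nonneg (n k : ℕ) (x : En n) : 0 ≤ rho n k x := (bmp n k).nonneg_normed x

lemma rho_support (n k : ℕ) : Function.support (rho n k) = ball 0 (rad k) :=
  (bmp n k).support_normed_eq

lemma rho_tsupport (n k : ℕ) : tsupport (rho n k) = closedBall 0 (rad k) :=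
  (bmp n k).tsupport_normed_eq

lemma rho_integral (n k : ℕ) : ∫ x, rho n k x = 1 := (bmp n k).integral_normed

lemma rho_neg (n k : ℕ) (x : En n) : rho n k (-x) = rho n k x := (bmp n k).normed_neg x

lemma rho_sub_comm (n k : ℕ) (x y : En n) : rho n k (x - y) = rho n k (y - x) := by
  rw [← neg_sub, rho_neg]

lemma moll_apply {n : ℕ} (g : En n → En n) (k : ℕ) (y : En n) :
    moll g k y = ∫ w, rho n k (y - w) • g w := by
  unfold moll
  rw [convolution_eq_swap]
  rfl

lemma rho_bound (n k : ℕ) (x : En n) :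
    rho n k x ≤ 4 ^ n / volume.real (ball (0 : En n) (2 * rad k)) := by
  have h := (bmp n k).normed_le_div_measure_closedBall_rIn volume x
  refine h.trans (le_of_eq ?_)
  rw [bmp_rIn]
  have hr := rad_pos k
  have hb : volume.real (ball (0 : En n) (2 * rad k)) =
      (2 * rad k) ^ Module.finrank ℝ (En n) * volume.real (ball (0 : En n) 1) := by
    simp only [Measure.real]
    rw [Measure.addHaar_ball_of_pos _ _ (by positivity), ENNReal.toReal_mul,
      ENNReal.toReal_ofReal (by positivity)]
  rw [Measure.addHaar_real_closedBall _ _ (by positivity), hb]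
  have h1 : 0 < volume.real (ball (0 : En n) 1) :=
    ENNReal.toReal_pos (measure_ball_pos _ _ one_pos).ne' measure_ball_lt_top.ne
  simp only [finrank_euclideanSpace, Fintype.card_fin]
  have : 2 * rad k = 4 * (rad k / 2) := by ring
  rw [this, mul_pow]
  have : 0 < (rad k / 2) ^ n := by positivity
  field_simp

lemma moll_contDiff {n : ℕ} {g : En n → En n} (hg : Integrable g) (k : ℕ) :
    ContDiff ℝ ∞ (moll g k) :=
  (rho_compact n k).contDiff_convolution_left _ (rho_contDiff n k) hg.locallyIntegrable

lemma rho_smul_integrable {n : ℕ} {g : En n → En n} (hg : Integrable g) (k : ℕ) (y : En n) :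
    Integrable (fun w => rho n k (y - w) • g w) := by
  obtain ⟨C, hC⟩ := (rho_contDiff n k).continuous.bounded_above_of_compact_support (rho_compact n k)
  have hm : AEStronglyMeasurable (fun w => rho n k (y - w)) volume :=
    ((rho_contDiff n k).continuous.comp (continuous_const.sub continuous_id)).aestronglyMeasurable
  exact hg.bdd_smul C hm (ae_of_all _ fun w => hC _)

lemma moll_sub_le {n : ℕ} {g : En n → En n} (hg : Integrable g) (k : ℕ) (x y z : En n)
    (hy : y ∈ ball x (rad k)) :
    ‖moll g k y - z‖ ≤ 4 ^ n * ((∫ w in ball x (2 * rad k), ‖g w - z‖) /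
      (volume (ball x (2 * rad k))).toReal) := by
  have hv : (volume (ball x (2 * rad k))).toReal = volume.real (ball (0 : En n) (2 * rad k)) := by
    rw [Measure.addHaar_ball_center]; rfl
  have e1 : ∫ w, rho n k (y - w) = 1 := by
    rw [integral_sub_left_eq_self (rho n k) volume y, rho_integral]
  have hInt0 : Integrable (fun w => rho n k (y - w)) := by
    have := ((rho_contDiff n k).continuous.integrable_of_hasCompactSupport (rho_compact n k)
      (μ := volume))
    exact this.comp_sub_left y
  have e2 : moll g k y - z = ∫ w, rho n k (y - w) • (g w - z) := by
    rw [moll_apply]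
    have : ∫ w, rho n k (y - w) • z = z := by
      rw [integral_smul_const, e1, one_smul]
    conv_lhs => rw [← this]
    rw [← integral_sub (rho_smul_integrable hg k y) (hInt0.smul_const z)]
    simp [smul_sub]
  rw [e2, hv]
  have hi : IntegrableOn (fun w => ‖g w - z‖) (ball x (2 * rad k)) :=
    (hg.integrableOn.sub (integrableOn_const measure_ball_lt_top.ne)).norm
  have e3 : ∀ w, w ∉ ball x (2 * rad k) → rho n k (y - w) • (g w - z) = 0 := by
    intro w hw
    have : y - w ∉ Function.support (rho n k) := by
      rw [rho_support]
      intro h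
      apply hw
      rw [mem_ball] at *
      rw [dist_zero_right, ← dist_eq_norm] at h
      calc dist w x ≤ dist w y + dist y x := dist_triangle _ _ _
        _ < _ := by rw [dist_comm w y]; linarith
    rw [Function.notMem_support.1 this, zero_smul]
  rw [← setIntegral_eq_integral_of_forall_compl_eq_zero e3]
  calc ‖∫ w in ball x (2 * rad k), rho n k (y - w) • (g w - z)‖
      ≤ ∫ w in ball x (2 * rad k), 4 ^ n / volume.real (ball (0 : En n) (2 * rad k)) * ‖g w - z‖ := by
        apply norm_integral_le_of_norm_le (hi.const_mul _)
        refine ae_of_all _ fun w => ?_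
        rw [norm_smul, Real.norm_of_nonneg (rho_nonneg _ _ _)]
        gcongr
        exact rho_bound n k _
    _ = _ := by
        rw [integral_const_mul]; ring

/-- Uniform closeness of mollifications near a point of approximate continuity. -/
lemma moll_close {n : ℕ} {U : Set (En n)} (hU : IsOpen U) {f : En n → En n}
    (hf : Integrable (U.indicator f)) {x z : En n} (hx : x ∈ U) (hz : ApproxLimAt f x z)
    {ε : ℝ} (hε : 0 < ε) :
    ∀ᶠ k in atTop, ∀ y ∈ ball x (rad k), ‖moll (U.indicator f) k y - z‖ < ε := by
  have h2 : Tendsto (fun k => 2 * rad k) atTop (𝓝[>] 0) := by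
    refine tendsto_nhdsWithin_iff.2 ⟨by simpa using rad_tendsto.const_mul 2, ?_⟩
    exact Eventually.of_forall fun k => by have := rad_pos k; simp [this]
  have h3 := (hz.comp h2).const_mul ((4 : ℝ) ^ n)
  rw [mul_zero] at h3
  obtain ⟨δ, hδ, hδU⟩ := Metric.isOpen_iff.1 hU x hx
  filter_upwards [h3.eventually_lt_const hε,
    (tendsto_nhdsWithin_iff.1 h2).1.eventually_lt_const hδ] with k hk hk2 y hy
  refine (moll_sub_le hf k x y z hy).trans_lt ?_
  have : ∫ w in ball x (2 * rad k), ‖U.indicator f w - z‖ = ∫ w in ball x (2 * rad k), ‖f w - z‖ := by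
    apply setIntegral_congr_fun measurableSet_ball
    intro w hw
    have : w ∈ U := hδU (ball_subset_ball hk2.le hw)
    simp [this]
  rw [this]
  exact hk

lemma moll_tendsto {n : ℕ} {U : Set (En n)} (hU : IsOpen U) {f : En n → En n}
    (hf : Integrable (U.indicator f)) {x z : En n} (hx : x ∈ U) (hz : ApproxLimAt f x z) :
    Tendsto (fun k => moll (U.indicator f) k x) atTop (𝓝 z) := by
  rw [Metric.tendsto_nhds]
  intro ε hε
  filter_upwards [moll_close hU hf hx hz hε] with k hk
  rw [dist_eq_norm]
  exact hk x (mem_ball_self (rad_pos k))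

lemma moll_tendsto_ae {n : ℕ} {g : En n → En n} (hg : Integrable g) :
    ∀ᵐ x, Tendsto (fun k => moll g k x) atTop (𝓝 (g x)) := by
  refine ContDiffBump.ae_convolution_tendsto_right_of_locallyIntegrable (φ := bmp n) (K := 2)
    rad_tendsto ?_ hg.locallyIntegrable
  refine Eventually.of_forall fun k => ?_
  rw [bmp_rOut, bmp_rIn]
  linarith


/-- The `i`-th column of `σ`. -/
def col {n : ℕ} (σ : En n → Fin n → Fin n → ℝ) (i : Fin n) (y : En n) : En n :=
  WithLp.toLp 2 (fun j => σ y j i)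

/-- The `j`-th row of `σ`. -/
def row {n : ℕ} (σ : En n → Fin n → Fin n → ℝ) (j : Fin n) (y : En n) : En n :=
  WithLp.toLp 2 (fun i => σ y j i)

lemma col_measurable {n : ℕ} {σ : En n → Fin n → Fin n → ℝ} (hσ : Measurable σ) (i : Fin n) :
    Measurable (col σ i) := by
  unfold col
  refine (WithLp.measurable_toLp 2 _).comp (measurable_pi_lambda _ fun j => ?_)
  exact (measurable_pi_apply i).comp ((measurable_pi_apply j).comp hσ)

lemma row_measurable {n : ℕ} {σ : En n → Fin n → Fin n → ℝ} (hσ : Measurable σ) (i : Fin n) :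
    Measurable (row σ i) := by
  unfold row
  refine (WithLp.measurable_toLp 2 _).comp (measurable_pi_lambda _ fun j => ?_)
  exact (measurable_pi_apply j).comp ((measurable_pi_apply i).comp hσ)

lemma sum_col_sq {n : ℕ} (σ : En n → Fin n → Fin n → ℝ) (y : En n) (h : frobNorm (σ y) = 1) :
    ∑ i, ‖col σ i y‖ ^ 2 = 1 := by
  have h2 : ∑ j, ∑ i, σ y j i ^ 2 = 1 := by
    unfold frobNorm at h
    rwa [Real.sqrt_eq_one] at h
  rw [← h2, Finset.sum_comm]
  refine Finset.sum_congr rfl fun i _ => ?_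
  rw [EuclideanSpace.norm_sq_eq]
  simp [col]

lemma sum_row_sq {n : ℕ} (σ : En n → Fin n → Fin n → ℝ) (y : En n) (h : frobNorm (σ y) = 1) :
    ∑ i, ‖row σ i y‖ ^ 2 = 1 := by
  have h2 : ∑ j, ∑ i, σ y j i ^ 2 = 1 := by
    unfold frobNorm at h
    rwa [Real.sqrt_eq_one] at h
  rw [← h2]
  refine Finset.sum_congr rfl fun i _ => ?_
  rw [EuclideanSpace.norm_sq_eq]
  simp [row]

lemma col_norm_le {n : ℕ} (σ : En n → Fin n → Fin n → ℝ) (y : En n) (h : frobNorm (σ y) = 1)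
    (i : Fin n) : ‖col σ i y‖ ≤ 1 := by
  have h1 := sum_col_sq σ y h
  have h2 : ‖col σ i y‖ ^ 2 ≤ ∑ i, ‖col σ i y‖ ^ 2 :=
    Finset.single_le_sum (f := fun i => ‖col σ i y‖ ^ 2) (fun _ _ => by positivity)
      (Finset.mem_univ i)
  rw [h1] at h2
  exact (sq_le_one_iff₀ (norm_nonneg _)).1 h2

lemma row_norm_le {n : ℕ} (σ : En n → Fin n → Fin n → ℝ) (y : En n) (h : frobNorm (σ y) = 1)
    (i : Fin n) : ‖row σ i y‖ ≤ 1 := by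
  have h1 := sum_row_sq σ y h
  have h2 : ‖row σ i y‖ ^ 2 ≤ ∑ i, ‖row σ i y‖ ^ 2 :=
    Finset.single_le_sum (f := fun i => ‖row σ i y‖ ^ 2) (fun _ _ => by positivity)
      (Finset.mem_univ i)
  rw [h1] at h2
  exact (sq_le_one_iff₀ (norm_nonneg _)).1 h2

lemma one_le_sum_row {n : ℕ} (σ : En n → Fin n → Fin n → ℝ) (y : En n) (h : frobNorm (σ y) = 1) :
    1 ≤ ∑ i, ‖row σ i y‖ := by
  rw [← sum_row_sq σ y h]
  refine Finset.sum_le_sum fun i _ => ?_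
  have := row_norm_le σ y h i
  nlinarith [norm_nonneg (row σ i y)]

lemma rho_bdd (n k : ℕ) : ∃ C, ∀ x, ‖rho n k x‖ ≤ C :=
  (rho_contDiff n k).continuous.bounded_above_of_compact_support (rho_compact n k)

lemma integrable_rho_col {n : ℕ} {σ : En n → Fin n → Fin n → ℝ} (hσ : Measurable σ)
    {ν : Measure (En n)} [IsFiniteMeasure ν] (h1 : ∀ᵐ x ∂ν, frobNorm (σ x) = 1)
    (k : ℕ) (x : En n) (i : Fin n) :
    Integrable (fun y => rho n k (x - y) • col σ i y) ν := by
  obtain ⟨C, hC⟩ := rho_bdd n k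
  have hm : AEStronglyMeasurable (fun w => rho n k (x - w)) ν :=
    ((rho_contDiff n k).continuous.comp (continuous_const.sub continuous_id)).aestronglyMeasurable
  refine Integrable.bdd_smul ?_ C hm (ae_of_all _ fun w => hC _)
  refine Integrable.of_bound (col_measurable hσ i).aestronglyMeasurable 1 ?_
  filter_upwards [h1] with y hy using col_norm_le σ y hy i

lemma fderiv_moll {n : ℕ} {Ω U : Set (En n)} (hU : IsOpen U) (hUΩ : U ⊆ Ω)
    {f : En n → En n} (hf : Integrable (U.indicator f))
    {σ : En n → Fin n → Fin n → ℝ} {ν : Measure (En n)} (hν : IsVariationMeasure Ω f σ ν)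
    (hνU : ν U < ⊤) (k : ℕ) (x : En n) (hx : closedBall x (rad k) ⊆ U) (i : Fin n) :
    fderiv ℝ (moll (U.indicator f) k) x (EuclideanSpace.single i 1) =
      ∫ y in U, rho n k (x - y) • col σ i y ∂ν := by
  obtain ⟨hσ, h1, h0, hibp⟩ := hν
  have : IsFiniteMeasure (ν.restrict U) := ⟨by simpa using hνU⟩
  set g := U.indicator f with hg
  have hD : HasFDerivAt (moll g k) _ x :=
    (rho_compact n k).hasFDerivAt_convolution_left (ContinuousLinearMap.lsmul ℝ ℝ)
      ((rho_contDiff n k).of_le (by simp)) hf.locallyIntegrable x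
  have hcD : Continuous (fderiv ℝ (rho n k)) := (rho_contDiff n k).continuous_fderiv (by simp)
  have hce : ConvolutionExistsAt (fderiv ℝ (rho n k)) g x
      ((ContinuousLinearMap.lsmul ℝ ℝ (E := En n)).precompL (En n)) volume :=
    ((rho_compact n k).fderiv ℝ).convolutionExists_left _ hcD hf.locallyIntegrable x
  have hce' := hce.integrable_swap
  rw [hD.fderiv, convolution_eq_swap, ContinuousLinearMap.integral_apply hce']
  simp only [ContinuousLinearMap.precompL_apply, ContinuousLinearMap.lsmul_apply]
  have hce2 : Integrable (fun t => (fderiv ℝ (rho n k) (x - t)) (EuclideanSpace.single i 1) • g t) :=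
    hce'.apply_continuousLinearMap (EuclideanSpace.single i 1)
  ext j
  have p1 := ((EuclideanSpace.proj j : En n →L[ℝ] ℝ)).integral_comp_comm hce2
  have p2 := ((EuclideanSpace.proj j : En n →L[ℝ] ℝ)).integral_comp_comm
    (integrable_rho_col hσ (ae_restrict_of_ae (s := U) h1) k x i)
  simp only [PiLp.proj_apply, PiLp.smul_apply, smul_eq_mul] at p1 p2
  rw [← p1, ← p2]
  set φ : En n → ℝ := fun w => rho n k (x - w) with hφ
  have hφs : Function.support φ ⊆ closedBall x (rad k) := by
    intro w hw
    have : x - w ∈ Function.support (rho n k) := hw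
    rw [rho_support, mem_ball, dist_zero_right, ← dist_eq_norm, dist_comm] at this
    exact mem_closedBall.2 this.le
  have hφt : tsupport φ ⊆ closedBall x (rad k) := closure_minimal hφs isClosed_closedBall
  have hφT : SmoothTest Ω φ :=
    ⟨(rho_contDiff n k).comp (contDiff_const.sub contDiff_id),
      HasCompactSupport.of_support_subset_isCompact (isCompact_closedBall x (rad k)) hφs,
      hφt.trans (hx.trans hUΩ)⟩
  have hφd : ∀ w v, fderiv ℝ φ w v = - fderiv ℝ (rho n k) (x - w) v := by
    intro w v
    have h := ((rho_contDiff n k).differentiable (by simp) (x - w)).hasFDerivAt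
    have h' : HasFDerivAt (fun w : En n => x - w) (-(ContinuousLinearMap.id ℝ (En n))) w :=
      (hasFDerivAt_id w).const_sub x
    have h2 : HasFDerivAt φ _ w := h.comp w h'
    rw [h2.fderiv]
    simp
  have key := hibp φ hφT j i
  have hz : ∀ w, w ∉ U → φ w = 0 := fun w hw =>
    Function.notMem_support.1 fun h => hw (hx (hφs h))
  have hz' : ∀ w, w ∉ U → fderiv ℝ φ w = 0 := fun w hw =>
    Function.notMem_support.1 fun h => hw (hx (hφt (support_fderiv_subset ℝ h)))
  have r1 : ∫ x_1, (fderiv ℝ (rho n k) (x - x_1)) (EuclideanSpace.single i 1) * (g x_1).ofLp j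
      = - ∫ w in Ω, f w j * fderiv ℝ φ w (EuclideanSpace.single i 1) := by
    rw [setIntegral_eq_integral_of_forall_compl_eq_zero, ← integral_neg]
    · refine integral_congr_ae (ae_of_all _ fun w => ?_)
      by_cases hw : w ∈ U
      · simp only [hφd, hg, indicator_of_mem hw]; ring
      · simp only [hz' w hw, hg, indicator_of_notMem hw]; simp
    · intro w hw
      rw [hz' w (fun h => hw (hUΩ h))]; simp
  have r2 : ∫ y in U, rho n k (x - y) * (col σ i y).ofLp j ∂ν = ∫ w, φ w * σ w j i ∂ν := by
    rw [setIntegral_eq_integral_of_forall_compl_eq_zero]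
    · rfl
    · intro w hw
      have := hz w hw
      simp only [hφ] at this
      rw [this, zero_mul]
  rw [r1, r2, key, neg_neg]


lemma smooth_bdd {n : ℕ} {E : Type*} [NormedAddCommGroup E] {ψ : En n → E}
    (h : Continuous ψ) (hc : HasCompactSupport ψ) : ∃ C, 0 ≤ C ∧ ∀ x, ‖ψ x‖ ≤ C := by
  obtain ⟨C, hC⟩ := h.bounded_above_of_compact_support hc
  exact ⟨C, (norm_nonneg _).trans (hC 0), hC⟩

/-- The operator-valued mollified integrand. -/
def AA {n : ℕ} (u ψ : En n → ℝ) (g : En n → En n) (k : ℕ) (x : En n) : En n →L[ℝ] ℝ :=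
  ψ x • fderiv ℝ u (moll g k x)

lemma AA_continuous {n : ℕ} {u ψ : En n → ℝ} (hu : ContDiff ℝ ∞ u) (hψ : ContDiff ℝ ∞ ψ)
    {g : En n → En n} (hg : Integrable g) (k : ℕ) : Continuous (AA u ψ g k) :=
  hψ.continuous.smul ((hu.continuous_fderiv (by simp)).comp (moll_contDiff hg k).continuous)

lemma AA_compact {n : ℕ} {u ψ : En n → ℝ} (hψ : HasCompactSupport ψ)
    {g : En n → En n} (k : ℕ) : HasCompactSupport (AA u ψ g k) :=
  hψ.smul_right

/-- The chain identity at level `k`. -/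
lemma chain_k {n : ℕ} {Ω U : Set (En n)} (hU : IsOpen U) (hUΩ : U ⊆ Ω)
    {f : En n → En n} (hf : Integrable (U.indicator f))
    {σ : En n → Fin n → Fin n → ℝ} {ν : Measure (En n)} (hν : IsVariationMeasure Ω f σ ν)
    (hνU : ν U < ⊤) {u : En n → ℝ} (hu : ContDiff ℝ ∞ u)
    {ψ : En n → ℝ} (hψ : SmoothTest U ψ) (k : ℕ)
    (hk : ∀ x ∈ tsupport ψ, closedBall x (rad k) ⊆ U) (i : Fin n) :
    ∫ x, u (moll (U.indicator f) k x) * fderiv ℝ ψ x (EuclideanSpace.single i 1) =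
      - ∫ y in U, ((rho n k ⋆[ContinuousLinearMap.lsmul ℝ ℝ, volume]
        AA u ψ (U.indicator f) k) y) (col σ i y) ∂ν := by
  have : IsFiniteMeasure (ν.restrict U) := ⟨by simpa using hνU⟩
  have h1 : ∀ᵐ y ∂ν.restrict U, frobNorm (σ y) = 1 := ae_restrict_of_ae hν.2.1
  have hσ := hν.1
  set g := U.indicator f with hg
  set v : En n := EuclideanSpace.single i 1 with hv
  have hfk := moll_contDiff hf k
  have huf : ContDiff ℝ ∞ (fun x => u (moll g k x)) := hu.comp hfk
  obtain ⟨hψ1, hψ2, hψ3⟩ := hψ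
  have cψ' : Continuous (fun x => fderiv ℝ ψ x v) :=
    (hψ1.continuous_fderiv (by simp)).clm_apply continuous_const
  have cuf' : Continuous (fun x => fderiv ℝ (fun x => u (moll g k x)) x v) :=
    (huf.continuous_fderiv (by simp)).clm_apply continuous_const
  have sψ' : HasCompactSupport (fun x => fderiv ℝ ψ x v) := hψ2.fderiv_apply ℝ v
  rw [integral_mul_fderiv_eq_neg_fderiv_mul_of_integrable
    ((cuf'.mul hψ1.continuous).integrable_of_hasCompactSupport hψ2.mul_left)
    ((huf.continuous.mul cψ').integrable_of_hasCompactSupport sψ'.mul_left)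
    ((huf.continuous.mul hψ1.continuous).integrable_of_hasCompactSupport hψ2.mul_left)
    (fun x _ => huf.differentiable (by simp) x) (fun x _ => hψ1.differentiable (by simp) x)]
  congr 1
  have cA := AA_continuous hu hψ1 hf k
  have sA : HasCompactSupport (AA u ψ g k) := AA_compact hψ2 k
  have e1 : ∀ x, fderiv ℝ (fun x => u (moll g k x)) x v * ψ x =
      ∫ y in U, rho n k (x - y) * (AA u ψ g k x) (col σ i y) ∂ν := by
    intro x
    by_cases hx : x ∈ tsupport ψ
    · have hd : HasFDerivAt (fun x => u (moll g k x)) _ x :=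
        ((hu.differentiable (by simp) (moll g k x)).hasFDerivAt).comp x
          (hfk.differentiable (by simp) x).hasFDerivAt
      rw [hd.fderiv]
      simp only [ContinuousLinearMap.comp_apply]
      rw [fderiv_moll hU hUΩ hf hν hνU k x (hk x hx) i]
      have := (AA u ψ g k x).integral_comp_comm (integrable_rho_col hσ h1 k x i)
      simp only [map_smul, smul_eq_mul] at this
      rw [this]
      simp [AA, mul_comm]
    · have : ψ x = 0 := image_eq_zero_of_notMem_tsupport hx
      simp [this, AA]
  simp_rw [e1]
  rw [integral_integral_swap]
  · refine integral_congr_ae (ae_of_all _ fun y => ?_)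
    have hInt0 : Integrable (fun x => rho n k (y - x) • AA u ψ g k x) := by
      have sR : HasCompactSupport (fun x => rho n k (y - x) • AA u ψ g k x) := by
        refine sA.mono fun x hx => ?_
        rw [Function.mem_support] at hx ⊢
        intro h0
        rw [h0, smul_zero] at hx
        exact hx rfl
      refine Continuous.integrable_of_hasCompactSupport ?_ sR
      exact ((rho_contDiff n k).continuous.comp (continuous_const.sub continuous_id)).smul cA
    simp only [convolution_eq_swap, ContinuousLinearMap.lsmul_apply]
    rw [ContinuousLinearMap.integral_apply hInt0]
    refine integral_congr_ae (ae_of_all _ fun x => ?_)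
    simp [rho_sub_comm n k x y]
  · obtain ⟨C, hC0, hC⟩ := smooth_bdd (rho_contDiff n k).continuous (rho_compact n k)
    have iA : Integrable (fun x => C * ‖AA u ψ g k x‖) :=
      ((cA.integrable_of_hasCompactSupport sA).norm).const_mul C
    have icol : Integrable (fun y => ‖col σ i y‖) (ν.restrict U) := by
      refine (Integrable.of_bound (col_measurable hσ i).aestronglyMeasurable 1 ?_).norm
      filter_upwards [h1] with y hy using col_norm_le σ y hy i
    refine (iA.mul_prod icol).mono ?_ (ae_of_all _ fun p => ?_)
    · refine AEStronglyMeasurable.mul ?_ ?_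
      · exact ((rho_contDiff n k).continuous.comp
          (continuous_fst.sub continuous_snd)).aestronglyMeasurable
      · refine (isBoundedBilinearMap_apply.continuous.measurable.comp
          ((cA.measurable.comp measurable_fst).prodMk
            ((col_measurable hσ i).comp measurable_snd))).aestronglyMeasurable
    · simp only [Function.uncurry]
      rw [norm_mul, norm_mul, norm_mul, norm_norm, norm_norm, Real.norm_of_nonneg hC0, mul_assoc]
      gcongr
      · exact hC _
      · exact (AA u ψ g k p.1).le_opNorm _

/-- The chain rule. -/
lemma chain_rule {n : ℕ} {Ω U : Set (En n)} (hU : IsOpen U) (hUΩ : U ⊆ Ω)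
    {f : En n → En n} (hf : Integrable (U.indicator f))
    {σ : En n → Fin n → Fin n → ℝ} {ν : Measure (En n)} (hν : IsVariationMeasure Ω f σ ν)
    (hνU : ν U < ⊤) {F : En n → En n} (hF : ∀ᵐ y ∂ν.restrict U, ApproxLimAt f y (F y))
    {u : En n → ℝ} (hu : ContDiff ℝ ∞ u) (huc : HasCompactSupport u)
    {ψ : En n → ℝ} (hψ : SmoothTest U ψ) (i : Fin n) :
    ∫ x in Ω, u (f x) * fderiv ℝ ψ x (EuclideanSpace.single i 1) =
      - ∫ y in U, ψ y * fderiv ℝ u (F y) (col σ i y) ∂ν := by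
  have : IsFiniteMeasure (ν.restrict U) := ⟨by simpa using hνU⟩
  have h1 : ∀ᵐ y ∂ν.restrict U, frobNorm (σ y) = 1 := ae_restrict_of_ae hν.2.1
  have hσ := hν.1
  set g := U.indicator f with hg
  set v : En n := EuclideanSpace.single i 1 with hv
  have hψ0 := hψ
  obtain ⟨hψ1, hψ2, hψ3⟩ := hψ
  have cψ' : Continuous (fun x => fderiv ℝ ψ x v) :=
    (hψ1.continuous_fderiv (by simp)).clm_apply continuous_const
  have sψ' : HasCompactSupport (fun x => fderiv ℝ ψ x v) := hψ2.fderiv_apply ℝ v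
  have hu' : Continuous (fderiv ℝ u) := hu.continuous_fderiv (by simp)
  obtain ⟨Mu, hMu0, hMu⟩ := smooth_bdd hu.continuous huc
  obtain ⟨Mu', hMu'0, hMu'⟩ := smooth_bdd hu' (huc.fderiv ℝ)
  obtain ⟨Mψ, hMψ0, hMψ⟩ := smooth_bdd hψ1.continuous hψ2
  have hz' : ∀ w, w ∉ U → fderiv ℝ ψ w = 0 := fun w hw =>
    Function.notMem_support.1 fun h => hw (hψ3 (support_fderiv_subset ℝ h))
  have lim1 : Tendsto (fun k => ∫ x, u (moll g k x) * fderiv ℝ ψ x v) atTop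
      (𝓝 (∫ x, u (g x) * fderiv ℝ ψ x v)) := by
    refine tendsto_integral_of_dominated_convergence (fun x => Mu * ‖fderiv ℝ ψ x v‖) ?_ ?_ ?_ ?_
    · intro k
      exact ((hu.continuous.comp (moll_contDiff hf k).continuous).mul cψ').aestronglyMeasurable
    · exact ((cψ'.integrable_of_hasCompactSupport sψ').norm).const_mul _
    · intro k
      refine ae_of_all _ fun x => ?_
      rw [norm_mul]
      gcongr
      exact hMu _
    · filter_upwards [moll_tendsto_ae hf] with x hx
      exact ((hu.continuous.tendsto _).comp hx).mul_const _
  have eL : ∫ x in Ω, u (f x) * fderiv ℝ ψ x v = ∫ x, u (g x) * fderiv ℝ ψ x v := by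
    rw [setIntegral_eq_integral_of_forall_compl_eq_zero]
    · refine integral_congr_ae (ae_of_all _ fun w => ?_)
      by_cases hw : w ∈ U
      · simp only [hg, indicator_of_mem hw]
      · simp only [hz' w hw]; simp
    · intro w hw
      rw [hz' w (fun h => hw (hUΩ h))]; simp
  have lim2 : Tendsto (fun k => ∫ y in U, ((rho n k ⋆[ContinuousLinearMap.lsmul ℝ ℝ, volume]
        AA u ψ g k) y) (col σ i y) ∂ν) atTop
      (𝓝 (∫ y in U, ψ y * fderiv ℝ u (F y) (col σ i y) ∂ν)) := by
    refine tendsto_integral_of_dominated_convergence (fun x => Mψ * Mu') ?_ ?_ ?_ ?_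
    · intro k
      have c : Continuous (rho n k ⋆[ContinuousLinearMap.lsmul ℝ ℝ, volume] AA u ψ g k) :=
        (rho_compact n k).continuous_convolution_left _ (rho_contDiff n k).continuous
          ((AA_continuous hu hψ1 hf k).locallyIntegrable)
      exact (isBoundedBilinearMap_apply.continuous.measurable.comp
          (c.measurable.prodMk (col_measurable hσ i))).aestronglyMeasurable
    · exact integrable_const _
    · intro k
      filter_upwards [h1] with y hy
      refine (ContinuousLinearMap.le_opNorm _ _).trans ?_
      have hc := col_norm_le σ y hy i
      have hb : ‖(rho n k ⋆[ContinuousLinearMap.lsmul ℝ ℝ, volume] AA u ψ g k) y‖ ≤ Mψ * Mu' := by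
        rw [← dist_zero_right]
        refine dist_convolution_le (by positivity) (rho_support n k).subset (rho_nonneg n k)
          (rho_integral n k) (AA_continuous hu hψ1 hf k).aestronglyMeasurable ?_
        intro x _
        rw [dist_zero_right, AA, norm_smul]
        gcongr
        · exact hMψ _
        · exact hMu' _
      calc _ ≤ Mψ * Mu' * 1 := by gcongr
        _ = _ := mul_one _
    · filter_upwards [hF, ae_restrict_mem hU.measurableSet] with y hy hyU
      have key : Tendsto (fun k => (rho n k ⋆[ContinuousLinearMap.lsmul ℝ ℝ, volume] AA u ψ g k) y)
          atTop (𝓝 (ψ y • fderiv ℝ u (F y))) := by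
        rw [Metric.tendsto_nhds]
        intro ε hε
        have cc : Continuous (fun p : En n × En n => ψ p.1 • fderiv ℝ u p.2) :=
          (hψ1.continuous.comp continuous_fst).smul (hu'.comp continuous_snd)
        obtain ⟨δ, hδ, hδ'⟩ := Metric.continuous_iff.1 cc (y, F y) (ε / 2) (by positivity)
        filter_upwards [moll_close hU hf hyU hy hδ, rad_tendsto.eventually_lt_const hδ] with k hk hk2
        refine lt_of_le_of_lt (dist_convolution_le (ε := ε / 2) (by positivity)
          (rho_support n k).subset (rho_nonneg n k)
          (rho_integral n k) (AA_continuous hu hψ1 hf k).aestronglyMeasurable ?_) (by linarith)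
        intro x hx
        refine (hδ' (x, moll g k x) ?_).le
        rw [Prod.dist_eq]
        refine max_lt ((mem_ball.1 hx).trans hk2) ?_
        rw [dist_eq_norm]
        exact hk x hx
      have := ((ContinuousLinearMap.apply ℝ ℝ (col σ i y)).continuous.tendsto _).comp key
      simpa [Function.comp_def] using this
  obtain ⟨δ, hδ, hδU⟩ := hψ2.isCompact.exists_cthickening_subset_open hU hψ3
  rw [eL]
  refine tendsto_nhds_unique lim1 (lim2.neg.congr' ?_)
  filter_upwards [rad_tendsto.eventually_lt_const hδ] with k hk
  refine (chain_k hU hUΩ hf hν hνU hu hψ0 k ?_ i).symm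
  intro x hx
  refine Subset.trans ?_ hδU
  exact (closedBall_subset_closedBall hk.le).trans (closedBall_subset_cthickening hx δ)


lemma tv_compare {n : ℕ} {μ₁ μ₂ : Measure (En n)} [IsFiniteMeasure μ₁] [IsFiniteMeasure μ₂]
    {U : Set (En n)} (hU : IsOpen U) {m τ : En n → En n} (hm : Measurable m) (hτ : Measurable τ)
    (im : Integrable m μ₁) (iτ : Integrable τ μ₂)
    (h : ∀ ψ : En n → ℝ, SmoothTest U ψ → ∫ x, ψ x • m x ∂μ₁ = ∫ x, ψ x • τ x ∂μ₂) :
    ∫⁻ x in U, ‖m x‖ₑ ∂μ₁ = ∫⁻ x in U, ‖τ x‖ₑ ∂μ₂ := by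
  obtain ⟨μ, hμ⟩ : ∃ μ, μ = μ₁ + μ₂ := ⟨_, rfl⟩
  have fμ : IsFiniteMeasure μ := by rw [hμ]; infer_instance
  have d1 : μ₁.HaveLebesgueDecomposition μ := Measure.haveLebesgueDecomposition_of_sigmaFinite μ₁ μ
  have d2 : μ₂.HaveLebesgueDecomposition μ := Measure.haveLebesgueDecomposition_of_sigmaFinite μ₂ μ
  have ac1 : μ₁ ≪ μ := by
    rw [hμ]; exact (Measure.le_add_right le_rfl).absolutelyContinuous
  have ac2 : μ₂ ≪ μ := by
    rw [hμ]; exact (Measure.le_add_left le_rfl).absolutelyContinuous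
  have i1 : Integrable (fun x => (μ₁.rnDeriv μ x).toReal • m x) μ :=
    (integrable_rnDeriv_smul_iff ac1).2 im
  have i2 : Integrable (fun x => (μ₂.rnDeriv μ x).toReal • τ x) μ :=
    (integrable_rnDeriv_smul_iff ac2).2 iτ
  have key : ∀ᵐ x ∂μ, x ∈ U →
      (μ₁.rnDeriv μ x).toReal • m x - (μ₂.rnDeriv μ x).toReal • τ x = 0 := by
    refine hU.ae_eq_zero_of_integral_contDiff_smul_eq_zero
      ((i1.sub i2).locallyIntegrable.locallyIntegrableOn U) ?_
    intro ψ hψ1 hψ2 hψ3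
    obtain ⟨C, hC0, hC⟩ := smooth_bdd hψ1.continuous hψ2
    have e := h ψ ⟨hψ1, hψ2, hψ3⟩
    have j1 : Integrable (fun x => ψ x • (μ₁.rnDeriv μ x).toReal • m x) μ := i1.bdd_smul C hψ1.continuous.aestronglyMeasurable (ae_of_all _ hC)
    have j2 : Integrable (fun x => ψ x • (μ₂.rnDeriv μ x).toReal • τ x) μ := i2.bdd_smul C hψ1.continuous.aestronglyMeasurable (ae_of_all _ hC)
    simp only [smul_sub]
    rw [integral_sub j1 j2]
    rw [← integral_rnDeriv_smul ac1, ← integral_rnDeriv_smul ac2] at e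
    simp_rw [smul_comm (ψ _)]
    rw [e, sub_self]
  rw [← lintegral_indicator hU.measurableSet, ← lintegral_indicator hU.measurableSet,
    ← lintegral_rnDeriv_mul ac1 (hm.enorm.indicator hU.measurableSet).aemeasurable,
    ← lintegral_rnDeriv_mul ac2 (hτ.enorm.indicator hU.measurableSet).aemeasurable]
  refine lintegral_congr_ae ?_
  filter_upwards [key, μ₁.rnDeriv_lt_top μ, μ₂.rnDeriv_lt_top μ] with x hx t1 t2
  by_cases hxU : x ∈ U
  · have e := sub_eq_zero.1 (hx hxU)
    have e' := congrArg (fun v => ‖v‖ₑ) e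
    simp only [enorm_smul] at e'
    rw [Real.enorm_of_nonneg ENNReal.toReal_nonneg, Real.enorm_of_nonneg ENNReal.toReal_nonneg,
      ENNReal.ofReal_toReal t1.ne, ENNReal.ofReal_toReal t2.ne] at e'
    simpa [hxU] using e'
  · simp [hxU]

/-- The density of `D(u ∘ f)` with respect to `|Df|`. -/
def mm {n : ℕ} (u : En n → ℝ) (F : En n → En n) (σ : En n → Fin n → Fin n → ℝ) (y : En n) : En n :=
  WithLp.toLp 2 (fun i => fderiv ℝ u (F y) (col σ i y))

lemma mm_measurable {n : ℕ} {u : En n → ℝ} (hu : ContDiff ℝ ∞ u) {F : En n → En n}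
    (hF : Measurable F) {σ : En n → Fin n → Fin n → ℝ} (hσ : Measurable σ) :
    Measurable (mm u F σ) := by
  refine (WithLp.measurable_toLp 2 _).comp (measurable_pi_lambda _ fun i => ?_)
  exact isBoundedBilinearMap_apply.continuous.measurable.comp
    (((hu.continuous_fderiv (by simp)).measurable.comp hF).prodMk (col_measurable hσ i))

lemma mm_norm_le {n : ℕ} (u : En n → ℝ) (F : En n → En n) (σ : En n → Fin n → Fin n → ℝ) (y : En n)
    (h : frobNorm (σ y) = 1) : ‖mm u F σ y‖ ≤ ‖fderiv ℝ u (F y)‖ := by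
  refine le_of_sq_le_sq ?_ (norm_nonneg _)
  rw [EuclideanSpace.norm_sq_eq]
  calc ∑ i, ‖(mm u F σ y).ofLp i‖ ^ 2 ≤ ∑ i, ‖fderiv ℝ u (F y)‖ ^ 2 * ‖col σ i y‖ ^ 2 := by
        refine Finset.sum_le_sum fun i _ => ?_
        rw [← mul_pow]
        gcongr
        exact (fderiv ℝ u (F y)).le_opNorm _
    _ = ‖fderiv ℝ u (F y)‖ ^ 2 := by
        rw [← Finset.mul_sum, sum_col_sq σ y h, mul_one]

lemma mm_integrable {n : ℕ} {u : En n → ℝ} (hu : ContDiff ℝ ∞ u) (huc : HasCompactSupport u)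
    {F : En n → En n} (hF : Measurable F) {σ : En n → Fin n → Fin n → ℝ} (hσ : Measurable σ)
    {ν : Measure (En n)} [IsFiniteMeasure ν] (h1 : ∀ᵐ y ∂ν, frobNorm (σ y) = 1) :
    Integrable (mm u F σ) ν := by
  obtain ⟨C, hC0, hC⟩ := smooth_bdd (hu.continuous_fderiv (by simp)) (huc.fderiv ℝ)
  refine Integrable.of_bound (mm_measurable hu hF hσ).aestronglyMeasurable C ?_
  filter_upwards [h1] with y hy
  exact (mm_norm_le u F σ y hy).trans (hC _)

lemma key_bound {n : ℕ} {Ω U Ω₂ : Set (En n)} (hU : IsOpen U) (hUΩ : U ⊆ Ω)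
    {f : En n → En n} (hf : Integrable (U.indicator f))
    {σ : En n → Fin n → Fin n → ℝ} {ν : Measure (En n)} (hν : IsVariationMeasure Ω f σ ν)
    (hνU : ν U < ⊤) {F : En n → En n} (hFm : Measurable F)
    (hF : ∀ᵐ y ∂ν.restrict U, ApproxLimAt f y (F y)) {K : ℝ} (hK : 0 ≤ K)
    (hT : ∀ u : En n → ℝ, SmoothTest Ω₂ u →
      ∃ νc : Measure (En n), MemBVlocs Ω (fun x => u (f x)) νc ∧
        νc Ω ≤ ENNReal.ofReal (K * ∫ y in Ω₂, ‖fderiv ℝ u y‖ ∂volume))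
    {u : En n → ℝ} (hu : SmoothTest Ω₂ u) :
    ∫ y in U, ‖mm u F σ y‖ ∂ν ≤ K * ∫ y, ‖fderiv ℝ u y‖ := by
  have : IsFiniteMeasure (ν.restrict U) := ⟨by simpa using hνU⟩
  have h1 : ∀ᵐ y ∂ν.restrict U, frobNorm (σ y) = 1 := ae_restrict_of_ae hν.2.1
  have hσ := hν.1
  obtain ⟨νc, ⟨-, -, τ, hτ, hτ1, -, hibp⟩, hle⟩ := hT u hu
  obtain ⟨hu1, hu2, hu3⟩ := hu
  have hcU : νc U ≤ ENNReal.ofReal (K * ∫ y in Ω₂, ‖fderiv ℝ u y‖ ∂volume) :=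
    (measure_mono hUΩ).trans hle
  have : IsFiniteMeasure (νc.restrict U) :=
    ⟨by simpa using hcU.trans_lt ENNReal.ofReal_lt_top⟩
  set T : En n → En n := fun y => WithLp.toLp 2 (τ y) with hTdef
  have hTm : Measurable T := (WithLp.measurable_toLp 2 _).comp hτ
  have hTn : ∀ᵐ y ∂νc.restrict U, ‖T y‖ = 1 := by
    filter_upwards [ae_restrict_of_ae hτ1] with y hy
    rw [EuclideanSpace.norm_eq]
    simpa [hTdef] using hy
  have iT : Integrable T (νc.restrict U) := by
    refine Integrable.of_bound hTm.aestronglyMeasurable 1 ?_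
    filter_upwards [hTn] with y hy using hy.le
  have im := mm_integrable hu1 hu2 hFm hσ h1
  have cmp := tv_compare hU (mm_measurable hu1 hFm hσ) hTm im iT ?_
  · rw [Measure.restrict_restrict hU.measurableSet, Measure.restrict_restrict hU.measurableSet,
      inter_self] at cmp
    have hR : ∫⁻ y in U, ‖T y‖ₑ ∂νc = νc U := by
      rw [← setLIntegral_one]
      refine lintegral_congr_ae ?_
      filter_upwards [hTn] with y hy
      rw [← ofReal_norm, hy, ENNReal.ofReal_one]
    rw [hR] at cmp
    have hset : ∫ y in Ω₂, ‖fderiv ℝ u y‖ = ∫ y, ‖fderiv ℝ u y‖ := by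
      apply setIntegral_eq_integral_of_forall_compl_eq_zero
      intro w hw
      have : fderiv ℝ u w = 0 :=
        Function.notMem_support.1 fun h => hw (hu3 (support_fderiv_subset ℝ h))
      simp [this]
    rw [hset] at hcU
    rw [integral_norm_eq_lintegral_enorm im.aestronglyMeasurable, cmp]
    exact ENNReal.toReal_le_of_le_ofReal
      (mul_nonneg hK (integral_nonneg fun _ => norm_nonneg _)) hcU
  · intro ψ hψ
    have hψΩ : SmoothTest Ω ψ := ⟨hψ.1, hψ.2.1, hψ.2.2.trans hUΩ⟩
    obtain ⟨C, hC0, hC⟩ := smooth_bdd hψ.1.continuous hψ.2.1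
    have j1 : Integrable (fun x => ψ x • mm u F σ x) (ν.restrict U) := im.bdd_smul C hψ.1.continuous.aestronglyMeasurable (ae_of_all _ hC)
    have j2 : Integrable (fun x => ψ x • T x) (νc.restrict U) := iT.bdd_smul C hψ.1.continuous.aestronglyMeasurable (ae_of_all _ hC)
    ext i
    have p1 := ((EuclideanSpace.proj i : En n →L[ℝ] ℝ)).integral_comp_comm j1
    have p2 := ((EuclideanSpace.proj i : En n →L[ℝ] ℝ)).integral_comp_comm j2
    simp only [PiLp.proj_apply, PiLp.smul_apply, smul_eq_mul] at p1 p2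
    rw [← p1, ← p2]
    have c := chain_rule hU hUΩ hf hν hνU hF hu1 hu2 hψ i
    have c2 := hibp ψ hψΩ i
    rw [c, neg_inj] at c2
    have c3 : ∫ y in U, ψ y * τ y i ∂νc = ∫ y, ψ y * τ y i ∂νc := by
      apply setIntegral_eq_integral_of_forall_compl_eq_zero
      intro w hw
      have : ψ w = 0 := image_eq_zero_of_notMem_tsupport fun h => hw (hψ.2.2 h)
      simp [this]
    rw [← c3] at c2
    exact c2


/-- The oscillating test function. -/
def osc {n : ℕ} (η : En n → ℝ) (j : Fin n) (t a : ℝ) (y : En n) : ℝ :=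
  η y * (t⁻¹ * Real.sin (t * y j + a))

lemma osc_smooth {n : ℕ} {η : En n → ℝ} {Ω : Set (En n)} (hη : SmoothTest Ω η) (j : Fin n)
    (t a : ℝ) : SmoothTest Ω (osc η j t a) := by
  obtain ⟨h1, h2, h3⟩ := hη
  refine ⟨?_, ?_, ?_⟩
  · have : ContDiff ℝ ∞ (fun y : En n => y j) := (EuclideanSpace.proj j : En n →L[ℝ] ℝ).contDiff
    unfold osc
    exact h1.mul (contDiff_const.mul (Real.contDiff_sin.comp
      ((contDiff_const.mul this).add contDiff_const)))
  · exact h2.mul_right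
  · exact (tsupport_mul_subset_left).trans h3

lemma osc_fderiv {n : ℕ} {η : En n → ℝ} {Ω : Set (En n)} (hη : SmoothTest Ω η) (j : Fin n)
    {t : ℝ} (ht : 0 < t) (a : ℝ) (y : En n) :
    fderiv ℝ (osc η j t a) y = (η y * Real.cos (t * y j + a)) • (EuclideanSpace.proj j : En n →L[ℝ] ℝ)
      + (t⁻¹ * Real.sin (t * y j + a)) • fderiv ℝ η y := by
  have d1 : HasFDerivAt η (fderiv ℝ η y) y := (hη.1.differentiable (by simp) y).hasFDerivAt
  have d2 : HasFDerivAt (fun y : En n => y j) (EuclideanSpace.proj j : En n →L[ℝ] ℝ) y :=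
    (EuclideanSpace.proj j : En n →L[ℝ] ℝ).hasFDerivAt
  have d3 := ((d2.const_mul t).add_const a).sin.const_mul t⁻¹
  have d4 : HasFDerivAt (osc η j t a) _ y := d1.mul d3
  rw [d4.fderiv]
  ext v
  simp
  field_simp

lemma proj_norm_le {n : ℕ} (j : Fin n) : ‖(EuclideanSpace.proj j : En n →L[ℝ] ℝ)‖ ≤ 1 := by
  refine ContinuousLinearMap.opNorm_le_bound _ zero_le_one fun x => ?_
  rw [one_mul]
  exact PiLp.norm_apply_le x j

lemma osc_mm {n : ℕ} {η : En n → ℝ} {Ω : Set (En n)} (hη : SmoothTest Ω η) (j : Fin n)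
    {t : ℝ} (ht : 0 < t) (a : ℝ) (F : En n → En n) (σ : En n → Fin n → Fin n → ℝ) (y : En n) :
    mm (osc η j t a) F σ y = (η (F y) * Real.cos (t * F y j + a)) • row σ j y
      + (t⁻¹ * Real.sin (t * F y j + a)) • mm η F σ y := by
  ext i
  simp [mm, osc_fderiv hη j ht, row, col]

section
variable {n : ℕ} {Ω U Ω₂ : Set (En n)} {f : En n → En n}
    {σ : En n → Fin n → Fin n → ℝ} {ν : Measure (En n)} {F : En n → En n} {K : ℝ}

lemma row_integrable {ν : Measure (En n)} [IsFiniteMeasure ν] (h1 : ∀ᵐ y ∂ν, frobNorm (σ y) = 1)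
    (hσ : Measurable σ) {b : En n → ℝ} (hb : Measurable b) {C : ℝ} (hC : ∀ y, |b y| ≤ C)
    (j : Fin n) : Integrable (fun y => b y * ‖row σ j y‖) ν := by
  refine Integrable.of_bound (hb.mul (row_measurable hσ j).norm).aestronglyMeasurable C ?_
  filter_upwards [h1] with y hy
  rw [norm_mul, norm_norm, Real.norm_eq_abs]
  have := row_norm_le σ y hy j
  calc _ ≤ C * 1 := mul_le_mul (hC y) this (norm_nonneg _) ((abs_nonneg _).trans (hC y))
    _ = C := mul_one _

lemma osc_one (hU : IsOpen U) (hUΩ : U ⊆ Ω) (hf : Integrable (U.indicator f))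
    (hν : IsVariationMeasure Ω f σ ν)
    (hνU : ν U < ⊤) (hFm : Measurable F)
    (hF : ∀ᵐ y ∂ν.restrict U, ApproxLimAt f y (F y)) (hK : 0 ≤ K)
    (hT : ∀ u : En n → ℝ, SmoothTest Ω₂ u →
      ∃ νc : Measure (En n), MemBVlocs Ω (fun x => u (f x)) νc ∧
        νc Ω ≤ ENNReal.ofReal (K * ∫ y in Ω₂, ‖fderiv ℝ u y‖ ∂volume))
    {η : En n → ℝ} (hη : SmoothTest Ω₂ η) (hη0 : ∀ y, 0 ≤ η y) {M : ℝ}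
    (hM : ∀ y, ‖fderiv ℝ η y‖ ≤ M) (j : Fin n) {t : ℝ} (ht : 0 < t) (a : ℝ) :
    ∫ y in U, (η (F y) * |Real.cos (t * F y j + a)|) * ‖row σ j y‖ ∂ν ≤
      K * (∫ y, η y) + t⁻¹ * (K * (∫ y, ‖fderiv ℝ η y‖) + M * ν.real U) := by
  have : IsFiniteMeasure (ν.restrict U) := ⟨by simpa using hνU⟩
  have h1 : ∀ᵐ y ∂ν.restrict U, frobNorm (σ y) = 1 := ae_restrict_of_ae hν.2.1
  have hσ := hν.1
  have hu := osc_smooth hη j t a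
  have kb := key_bound hU hUΩ hf hν hνU hFm hF hK hT hu
  have im := (mm_integrable hu.1 hu.2.1 hFm hσ h1).norm
  obtain ⟨C, hC0, hC⟩ := smooth_bdd hη.1.continuous hη.2.1
  have hFj : Measurable (fun y => F y j) :=
    (EuclideanSpace.proj j : En n →L[ℝ] ℝ).continuous.measurable.comp hFm
  have iη : Integrable η := hη.1.continuous.integrable_of_hasCompactSupport hη.2.1
  have iη' : Integrable (fun y => ‖fderiv ℝ η y‖) :=
    ((hη.1.continuous_fderiv (by simp)).integrable_of_hasCompactSupport (hη.2.1.fderiv ℝ)).norm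
  have iu' : Integrable (fun y => ‖fderiv ℝ (osc η j t a) y‖) :=
    ((hu.1.continuous_fderiv (by simp)).integrable_of_hasCompactSupport (hu.2.1.fderiv ℝ)).norm
  have ti : 0 < t⁻¹ := inv_pos.2 ht
  have b1 : ∫ y in U, (η (F y) * |Real.cos (t * F y j + a)|) * ‖row σ j y‖ ∂ν ≤
      ∫ y in U, (‖mm (osc η j t a) F σ y‖ + t⁻¹ * M) ∂ν := by
    refine integral_mono_ae (row_integrable (C := C) h1 hσ ?_ ?_ j)
      (im.add (integrable_const _)) ?_
    · have m1 : Measurable (fun y => η (F y)) := hη.1.continuous.measurable.comp hFm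
      have m2 : Measurable (fun y => Real.cos (t * F y j + a)) :=
        Real.measurable_cos.comp ((hFj.const_mul t).add_const a)
      exact m1.mul m2.abs
    · intro y
      rw [abs_mul, abs_abs]
      calc _ ≤ C * 1 := mul_le_mul (hC _) (Real.abs_cos_le_one _) (abs_nonneg _) hC0
        _ = C := mul_one _
    · filter_upwards [h1] with y hy
      have e := osc_mm hη j ht a F σ y
      have e2 : (η (F y) * Real.cos (t * F y j + a)) • row σ j y =
          mm (osc η j t a) F σ y - (t⁻¹ * Real.sin (t * F y j + a)) • mm η F σ y := by
        rw [e]; abel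
      have e3 := congrArg norm e2
      rw [norm_smul, norm_mul, Real.norm_of_nonneg (hη0 _), Real.norm_eq_abs] at e3
      rw [e3]
      refine (norm_sub_le _ _).trans ?_
      gcongr
      rw [norm_smul, norm_mul, Real.norm_of_nonneg ti.le, mul_assoc]
      gcongr
      have s1 : ‖Real.sin (t * F y j + a)‖ ≤ 1 := Real.abs_sin_le_one _
      have s2 := (mm_norm_le η F σ y hy).trans (hM _)
      calc _ ≤ 1 * M := mul_le_mul s1 s2 (norm_nonneg _) zero_le_one
        _ = M := one_mul _
  have b2 : ∫ y, ‖fderiv ℝ (osc η j t a) y‖ ≤ ∫ y, (η y + t⁻¹ * ‖fderiv ℝ η y‖) := by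
    refine integral_mono iu' (iη.add (iη'.const_mul _)) fun y => ?_
    simp only
    rw [osc_fderiv hη j ht a y]
    refine (norm_add_le _ _).trans ?_
    rw [norm_smul, norm_smul, norm_mul, norm_mul, Real.norm_of_nonneg (hη0 _),
      Real.norm_of_nonneg ti.le]
    have s1 : ‖Real.sin (t * y j + a)‖ ≤ 1 := Real.abs_sin_le_one _
    have s2 : ‖Real.cos (t * y j + a)‖ ≤ 1 := Real.abs_cos_le_one _
    have s3 := proj_norm_le j
    have := hη0 y
    calc _ ≤ η y * 1 * 1 + t⁻¹ * 1 * ‖fderiv ℝ η y‖ := by gcongr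
      _ = _ := by ring
  rw [integral_add iη (iη'.const_mul _), integral_const_mul] at b2
  rw [integral_add im (integrable_const _), integral_const] at b1
  simp only [measureReal_restrict_apply_univ, smul_eq_mul] at b1
  have b3 := mul_le_mul_of_nonneg_left b2 hK
  calc _ ≤ _ := b1
    _ ≤ K * ((∫ y, η y) + t⁻¹ * ∫ y, ‖fderiv ℝ η y‖) + ν.real U * (t⁻¹ * M) := by linarith
    _ = _ := by ring

lemma eta_bound (hU : IsOpen U) (hUΩ : U ⊆ Ω) (hf : Integrable (U.indicator f))
    (hν : IsVariationMeasure Ω f σ ν)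
    (hνU : ν U < ⊤) (hFm : Measurable F)
    (hF : ∀ᵐ y ∂ν.restrict U, ApproxLimAt f y (F y)) (hK : 0 ≤ K)
    (hT : ∀ u : En n → ℝ, SmoothTest Ω₂ u →
      ∃ νc : Measure (En n), MemBVlocs Ω (fun x => u (f x)) νc ∧
        νc Ω ≤ ENNReal.ofReal (K * ∫ y in Ω₂, ‖fderiv ℝ u y‖ ∂volume))
    {η : En n → ℝ} (hη : SmoothTest Ω₂ η) (hη0 : ∀ y, 0 ≤ η y) :
    ∫ y in U, η (F y) ∂ν ≤ 2 * n * K * ∫ y, η y := by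
  have : IsFiniteMeasure (ν.restrict U) := ⟨by simpa using hνU⟩
  have h1 : ∀ᵐ y ∂ν.restrict U, frobNorm (σ y) = 1 := ae_restrict_of_ae hν.2.1
  have hσ := hν.1
  obtain ⟨C, hC0, hC⟩ := smooth_bdd hη.1.continuous hη.2.1
  obtain ⟨M, hM0, hM⟩ := smooth_bdd (hη.1.continuous_fderiv (by simp)) (hη.2.1.fderiv ℝ)
  have m1 : Measurable (fun y => η (F y)) := hη.1.continuous.measurable.comp hFm
  have iR : ∀ j, Integrable (fun y => η (F y) * ‖row σ j y‖) (ν.restrict U) := fun j =>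
    row_integrable (C := C) h1 hσ m1 (fun y => hC _) j
  have step : ∀ j : Fin n, ∫ y in U, η (F y) * ‖row σ j y‖ ∂ν ≤ 2 * K * ∫ y, η y := by
    intro j
    have hFj : Measurable (fun y => F y j) :=
      (EuclideanSpace.proj j : En n →L[ℝ] ℝ).continuous.measurable.comp hFm
    set D := K * (∫ y, ‖fderiv ℝ η y‖) + M * ν.real U with hD
    have iC : ∀ t a : ℝ, Integrable (fun y => (η (F y) * |Real.cos (t * F y j + a)|) * ‖row σ j y‖)
        (ν.restrict U) := by
      intro t a
      refine row_integrable (C := C) h1 hσ ?_ ?_ j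
      · have m2 : Measurable (fun y => Real.cos (t * F y j + a)) :=
          Real.measurable_cos.comp ((hFj.const_mul t).add_const a)
        exact m1.mul m2.abs
      · intro y
        rw [abs_mul, abs_abs]
        calc _ ≤ C * 1 := mul_le_mul (hC _) (Real.abs_cos_le_one _) (abs_nonneg _) hC0
          _ = C := mul_one _
    have bt : ∀ t : ℝ, 0 < t → ∫ y in U, η (F y) * ‖row σ j y‖ ∂ν ≤
        2 * K * (∫ y, η y) + t⁻¹ * (2 * D) := by
      intro t ht
      have o1 := osc_one hU hUΩ hf hν hνU hFm hF hK hT hη hη0 hM j ht 0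
      have o2 := osc_one hU hUΩ hf hν hνU hFm hF hK hT hη hη0 hM j ht (Real.pi / 2)
      have o3 : ∫ y in U, η (F y) * ‖row σ j y‖ ∂ν ≤
          ∫ y in U, ((η (F y) * |Real.cos (t * F y j + 0)|) * ‖row σ j y‖ +
            (η (F y) * |Real.cos (t * F y j + Real.pi / 2)|) * ‖row σ j y‖) ∂ν := by
        refine integral_mono (iR j) ((iC t 0).add (iC t (Real.pi / 2))) fun y => ?_
        simp only
        rw [Real.cos_add_pi_div_two, add_zero, abs_neg, ← add_mul, ← mul_add]
        have c1 : 1 ≤ |Real.cos (t * F y j)| + |Real.sin (t * F y j)| := by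
          have := Real.sin_sq_add_cos_sq (t * F y j)
          have a1 := Real.abs_cos_le_one (t * F y j)
          have a2 := Real.abs_sin_le_one (t * F y j)
          rw [← sq_abs, ← sq_abs (Real.cos _)] at this
          nlinarith [abs_nonneg (Real.cos (t * F y j)), abs_nonneg (Real.sin (t * F y j))]
        have := hη0 (F y)
        calc η (F y) * ‖row σ j y‖ = η (F y) * 1 * ‖row σ j y‖ := by ring
          _ ≤ _ := by gcongr
      rw [integral_add (iC t 0) (iC t (Real.pi / 2))] at o3
      linarith
    have lim : Tendsto (fun t : ℝ => 2 * K * (∫ y, η y) + t⁻¹ * (2 * D)) atTop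
        (𝓝 (2 * K * ∫ y, η y)) := by
      have := (tendsto_inv_atTop_zero (𝕜 := ℝ)).mul_const (2 * D)
      simpa using this.const_add (2 * K * ∫ y, η y)
    refine ge_of_tendsto lim ?_
    filter_upwards [eventually_gt_atTop 0] with t ht using bt t ht
  calc ∫ y in U, η (F y) ∂ν ≤ ∫ y in U, ∑ j, η (F y) * ‖row σ j y‖ ∂ν := by
        refine integral_mono_ae ?_ (integrable_finsetSum _ fun j _ => iR j) ?_
        · exact Integrable.of_bound m1.aestronglyMeasurable C (ae_of_all _ fun y => hC _)
        · filter_upwards [h1] with y hy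
          rw [← Finset.mul_sum]
          exact le_mul_of_one_le_right (hη0 _) (one_le_sum_row σ y hy)
    _ = ∑ j, ∫ y in U, η (F y) * ‖row σ j y‖ ∂ν := integral_finsetSum _ fun j _ => iR j
    _ ≤ ∑ j : Fin n, 2 * K * ∫ y, η y := Finset.sum_le_sum fun j _ => step j
    _ = _ := by simp; ring

end

lemma cutoff_exists {n : ℕ} {C V : Set (En n)} (hC : IsCompact C) (hV : IsOpen V) (hCV : C ⊆ V) :
    ∃ η : En n → ℝ, SmoothTest V η ∧ (∀ y, 0 ≤ η y) ∧ (∀ y, η y ≤ 1) ∧ ∀ y ∈ C, η y = 1 := by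
  obtain ⟨W, hW, hCW, hWV, hWc⟩ := exists_open_between_and_isCompact_closure hC hV hCV
  obtain ⟨η, h1, h2, h3, h4⟩ := exists_contMDiff_support_eq_eq_one_iff
    (n := (⊤ : ℕ∞)) (modelWithCornersSelf ℝ (En n)) hW hC.isClosed hCW
  have hts : tsupport η = closure W := by rw [tsupport, h3]
  refine ⟨η, ⟨h1.contDiff, ?_, by rw [hts]; exact hWV⟩, fun y => ?_, fun y => ?_, fun y hy => ?_⟩
  · rw [HasCompactSupport, hts]; exact hWc
  · exact (h2 ⟨y, rfl⟩).1
  · exact (h2 ⟨y, rfl⟩).2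
  · exact (h4 y).1 hy

section
variable {n : ℕ} {Ω U Ω₂ : Set (En n)} {f : En n → En n}
    {σ : En n → Fin n → Fin n → ℝ} {ν : Measure (En n)} {F : En n → En n} {K : ℝ}

lemma compact_open_bound (hU : IsOpen U) (hUΩ : U ⊆ Ω) (hf : Integrable (U.indicator f))
    (hν : IsVariationMeasure Ω f σ ν)
    (hνU : ν U < ⊤) (hFm : Measurable F)
    (hF : ∀ᵐ y ∂ν.restrict U, ApproxLimAt f y (F y)) (hK : 0 ≤ K)
    (hT : ∀ u : En n → ℝ, SmoothTest Ω₂ u →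
      ∃ νc : Measure (En n), MemBVlocs Ω (fun x => u (f x)) νc ∧
        νc Ω ≤ ENNReal.ofReal (K * ∫ y in Ω₂, ‖fderiv ℝ u y‖ ∂volume))
    {C V : Set (En n)} (hC : IsCompact C) (hV : IsOpen V) (hCV : C ⊆ V) (hVΩ : V ⊆ Ω₂) :
    (ν.restrict U) (F ⁻¹' C) ≤ ENNReal.ofReal (2 * n * K) * volume V := by
  have : IsFiniteMeasure (ν.restrict U) := ⟨by simpa using hνU⟩
  obtain ⟨η, hη, h0, h1, hC1⟩ := cutoff_exists hC hV hCV
  have hη2 : SmoothTest Ω₂ η := ⟨hη.1, hη.2.1, hη.2.2.trans hVΩ⟩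
  have eb := eta_bound hU hUΩ hf hν hνU hFm hF hK hT hη2 h0
  have m1 : Measurable (fun y => η (F y)) := hη.1.continuous.measurable.comp hFm
  have i1 : Integrable (fun y => η (F y)) (ν.restrict U) :=
    Integrable.of_bound m1.aestronglyMeasurable 1 (ae_of_all _ fun y => by
      rw [Real.norm_of_nonneg (h0 _)]; exact h1 _)
  have i2 : Integrable η := hη.1.continuous.integrable_of_hasCompactSupport hη.2.1
  have hnK : (0 : ℝ) ≤ 2 * n * K := by positivity
  calc (ν.restrict U) (F ⁻¹' C) = ∫⁻ y in U, (F ⁻¹' C).indicator 1 y ∂ν := by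
        rw [lintegral_indicator_one (hFm hC.measurableSet)]
    _ ≤ ∫⁻ y in U, ENNReal.ofReal (η (F y)) ∂ν := by
        refine lintegral_mono fun y => ?_
        by_cases hy : y ∈ F ⁻¹' C
        · simp [hy, hC1 _ hy]
        · simp [hy]
    _ = ENNReal.ofReal (∫ y in U, η (F y) ∂ν) :=
        (ofReal_integral_eq_lintegral_ofReal i1 (ae_of_all _ fun y => h0 _)).symm
    _ ≤ ENNReal.ofReal (2 * n * K * ∫ y, η y) := ENNReal.ofReal_le_ofReal eb
    _ = ENNReal.ofReal (2 * n * K) * ∫⁻ y, ENNReal.ofReal (η y) := by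
        rw [ENNReal.ofReal_mul hnK, ofReal_integral_eq_lintegral_ofReal i2 (ae_of_all _ h0)]
    _ ≤ ENNReal.ofReal (2 * n * K) * ∫⁻ y, V.indicator 1 y := by
        gcongr with y
        by_cases hy : y ∈ V
        · simpa [hy] using h1 y
        · have : η y = 0 := image_eq_zero_of_notMem_tsupport fun h => hy (hη.2.2 h)
          simp [this]
    _ = _ := by rw [lintegral_indicator_one hV.measurableSet]

lemma borel_bound (hU : IsOpen U) (hUΩ : U ⊆ Ω) (hΩ₂ : IsOpen Ω₂)
    (hf : Integrable (U.indicator f))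
    (hν : IsVariationMeasure Ω f σ ν)
    (hνU : ν U < ⊤) (hFm : Measurable F)
    (hF : ∀ᵐ y ∂ν.restrict U, ApproxLimAt f y (F y)) (hK : 0 ≤ K)
    (hT : ∀ u : En n → ℝ, SmoothTest Ω₂ u →
      ∃ νc : Measure (En n), MemBVlocs Ω (fun x => u (f x)) νc ∧
        νc Ω ≤ ENNReal.ofReal (K * ∫ y in Ω₂, ‖fderiv ℝ u y‖ ∂volume))
    {A : Set (En n)} (hA : MeasurableSet A) (hAΩ : A ⊆ Ω₂) :
    (ν.restrict U) (F ⁻¹' A) ≤ ENNReal.ofReal (2 * n * K) * volume A := by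
  have : IsFiniteMeasure (ν.restrict U) := ⟨by simpa using hνU⟩
  rw [← Measure.map_apply hFm hA]
  refine le_of_forall_lt fun r hr => ?_
  obtain ⟨C, hCA, hC, hrC⟩ := hA.exists_lt_isCompact_of_ne_top (measure_ne_top _ _) hr
  refine hrC.trans_le ?_
  rw [Measure.map_apply hFm hC.measurableSet]
  refine le_trans ?_ (mul_le_mul_right (measure_mono hCA) _)
  have hfin : volume C ≠ ⊤ := hC.measure_lt_top.ne
  refine ENNReal.le_of_forall_pos_le_add ?_
  intro ε hε _
  have hc : ENNReal.ofReal (2 * n * K) ≠ ⊤ := ENNReal.ofReal_ne_top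
  obtain ⟨δ, hδ, hδε⟩ : ∃ δ : ℝ≥0∞, δ ≠ 0 ∧ ENNReal.ofReal (2 * n * K) * δ ≤ ε := by
    refine ⟨ε / (ENNReal.ofReal (2 * n * K)), ?_, ENNReal.mul_div_le⟩
    exact (ENNReal.div_pos (by exact_mod_cast hε.ne') hc).ne'
  obtain ⟨V, hCV, hV, hVC⟩ := C.exists_isOpen_le_add volume hδ
  have := compact_open_bound hU hUΩ hf hν hνU hFm hF hK hT hC (hV.inter hΩ₂)
    (subset_inter hCV (hCA.trans hAΩ)) inter_subset_right
  refine this.trans ?_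
  calc _ ≤ ENNReal.ofReal (2 * n * K) * (volume C + δ) := by
        gcongr
        exact (measure_mono inter_subset_left).trans hVC
    _ ≤ _ := by rw [mul_add]; gcongr

lemma local_bound (hU : IsOpen U) (hUΩ : U ⊆ Ω) (hΩ₂ : IsOpen Ω₂)
    (hf : Integrable (U.indicator f))
    (hν : IsVariationMeasure Ω f σ ν) (hjump : NoJumpPart f ν)
    (hνU : ν U < ⊤) (hK : 0 ≤ K)
    (hT : ∀ u : En n → ℝ, SmoothTest Ω₂ u →
      ∃ νc : Measure (En n), MemBVlocs Ω (fun x => u (f x)) νc ∧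
        νc Ω ≤ ENNReal.ofReal (K * ∫ y in Ω₂, ‖fderiv ℝ u y‖ ∂volume))
    {A : Set (En n)} (hA : MeasurableSet A) (hAΩ : A ⊆ Ω₂) :
    ν (tildePreimage f A ∩ U) ≤ ENNReal.ofReal (2 * n * K) * volume A := by
  have hex : ∀ᵐ y ∂ν.restrict U, ∃ z, ApproxLimAt f y z := by
    refine ae_restrict_of_ae ?_
    exact hjump
  have hmem : ∀ᵐ y ∂ν.restrict U, y ∈ U := ae_restrict_mem hU.measurableSet
  obtain ⟨F, hFm, hFt⟩ := measurable_limit_of_tendsto_metrizable_ae (μ := ν.restrict U)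
    (f := fun k => moll (U.indicator f) k) (L := atTop)
    (fun k => (moll_contDiff hf k).continuous.measurable.aemeasurable) (by
      filter_upwards [hex, hmem] with y hy hyU
      obtain ⟨z, hz⟩ := hy
      exact ⟨z, moll_tendsto hU hf hyU hz⟩)
  have hF : ∀ᵐ y ∂ν.restrict U, ApproxLimAt f y (F y) := by
    filter_upwards [hex, hmem, hFt] with y hy hyU ht
    obtain ⟨z, hz⟩ := hy
    rwa [tendsto_nhds_unique ht (moll_tendsto hU hf hyU hz)]
  rw [← Measure.restrict_apply' hU.measurableSet]
  refine le_trans (measure_mono_ae ?_)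
    (borel_bound hU hUΩ hΩ₂ hf hν hνU hFm hF hK hT hA hAΩ)
  filter_upwards [hmem, hFt] with y hyU ht hy
  obtain ⟨z, hzA, hz⟩ := hy
  show F y ∈ A
  rwa [tendsto_nhds_unique ht (moll_tendsto hU hf hyU hz)]

end

lemma exhaust {n : ℕ} {Ω : Set (En n)} (hΩ : IsOpen Ω) :
    ∃ U : ℕ → Set (En n), Monotone U ∧ (∀ k, IsOpen (U k)) ∧
      (∀ k, ∃ C, IsCompact C ∧ C ⊆ Ω ∧ U k ⊆ C) ∧ ⋃ k, U k = Ω := by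
  have hpos : ∀ k : ℕ, (0 : ℝ≥0∞) < ((k : ℝ≥0∞) + 1)⁻¹ := fun k => by
    rw [ENNReal.inv_pos]; exact_mod_cast ENNReal.natCast_ne_top (k + 1)
  refine ⟨fun k => ball 0 k ∩ {x | ((k : ℝ≥0∞) + 1)⁻¹ < infEDist x Ωᶜ}, ?_, ?_, ?_, ?_⟩
  · intro k l hkl
    refine inter_subset_inter (ball_subset_ball (by exact_mod_cast hkl)) fun x hx => ?_
    rw [mem_ofPred_eq] at hx ⊢
    refine lt_of_le_of_lt ?_ hx
    gcongr
  · exact fun k => isOpen_ball.inter (isOpen_lt continuous_const continuous_infEDist)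
  · intro k
    refine ⟨closedBall 0 k ∩ {x | ((k : ℝ≥0∞) + 1)⁻¹ ≤ infEDist x Ωᶜ}, ?_, ?_, ?_⟩
    · exact (isCompact_closedBall _ _).inter_right (isClosed_le continuous_const continuous_infEDist)
    · rintro x ⟨-, hx⟩
      by_contra h
      have : infEDist x Ωᶜ = 0 := infEDist_zero_of_mem h
      rw [mem_ofPred_eq, this] at hx
      exact absurd (hpos k) (not_lt.2 hx)
    · exact inter_subset_inter ball_subset_closedBall fun x hx => by
        rw [mem_ofPred_eq] at hx ⊢
        exact hx.le
  · ext x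
    simp only [mem_iUnion, mem_inter_iff, mem_ball, mem_ofPred_eq, dist_zero_right]
    constructor
    · rintro ⟨k, -, hk⟩
      by_contra h
      have : infEDist x Ωᶜ = 0 := infEDist_zero_of_mem h
      rw [this] at hk
      exact not_lt_zero hk
    · intro hx
      have h0 : infEDist x Ωᶜ ≠ 0 := by
        intro h
        have := (mem_iff_infEDist_zero_of_closed hΩ.isClosed_compl).2 h
        exact this hx
      obtain ⟨k₁, hk₁⟩ := exists_nat_gt ‖x‖
      obtain ⟨k₂, hk₂⟩ := ENNReal.exists_inv_nat_lt h0
      refine ⟨max k₁ k₂, hk₁.trans_le (by exact_mod_cast le_max_left _ _), lt_of_le_of_lt ?_ hk₂⟩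
      apply ENNReal.inv_le_inv.2
      exact_mod_cast (le_max_right k₁ k₂).trans (Nat.le_succ _)

/-- **Theorem (Statement 15).** Let `f ∈ BV_loc(Ω₁, Ω₂)` have no jump part, and suppose
`T_f(u) = u ∘ f` maps `C_c^∞(Ω₂)` into `BV_loc(Ω₁)` with
`|D(u∘f)|(Ω₁) ≤ K·|Du|(Ω₂)` for all `u ∈ C_c^∞(Ω₂)`.  Then
`|Df|(f̃⁻¹(A)) ≤ 16·n·K·Lⁿ(A)` for all Borel `A ⊆ Ω₂`. -/
theorem necessary_variation_bound {n : ℕ}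
    (Ω₁ Ω₂ : Set (En n)) (hΩ₁ : IsOpen Ω₁) (hΩ₂ : IsOpen Ω₂)
    (f : En n → En n) (hmaps : MapsTo f Ω₁ Ω₂)
    (νf : Measure (En n)) (hBV : MemBVloc Ω₁ f νf) (hjump : NoJumpPart f νf)
    (K : ℝ) (hK : 0 ≤ K)
    (hT : ∀ u : En n → ℝ, SmoothTest Ω₂ u →
      ∃ νc : Measure (En n), MemBVlocs Ω₁ (fun x => u (f x)) νc ∧
        νc Ω₁ ≤ ENNReal.ofReal (K * ∫ y in Ω₂, ‖fderiv ℝ u y‖ ∂volume)) :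
    ∀ A : Set (En n), A ⊆ Ω₂ → MeasurableSet A →
      νf (tildePreimage f A) ≤ ENNReal.ofReal (16 * n * K) * volume A := by
  intro A hAΩ hA
  obtain ⟨hloc, hfin, σ, hν⟩ := hBV
  obtain ⟨U, hmono, hUo, hUc, hUΩ⟩ := exhaust hΩ₁
  have hnull : νf (tildePreimage f A) ≤ νf (⋃ k, tildePreimage f A ∩ U k) := by
    rw [← inter_iUnion, hUΩ]
    calc νf (tildePreimage f A) ≤ νf (tildePreimage f A ∩ Ω₁) + νf (tildePreimage f A \ Ω₁) :=
          measure_le_inter_add_sdiff _ _ _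
      _ ≤ νf (tildePreimage f A ∩ Ω₁) + νf Ω₁ᶜ := by
          gcongr
          exact fun x hx => hx.2
      _ = _ := by rw [hν.2.2.1, add_zero]
  refine hnull.trans ?_
  have hm : Monotone fun k => tildePreimage f A ∩ U k := fun k l hkl =>
    inter_subset_inter_right _ (hmono hkl)
  rw [hm.measure_iUnion]
  refine iSup_le fun k => ?_
  obtain ⟨C, hC, hCΩ, hUC⟩ := hUc k
  have hi : Integrable ((U k).indicator f) := by
    rw [integrable_indicator_iff (hUo k).measurableSet]
    exact (hloc.integrableOn_compact_subset hCΩ hC).mono_set hUC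
  refine (local_bound (hUo k) (hUC.trans hCΩ) hΩ₂ hi hν hjump
    ((measure_mono hUC).trans_lt (hfin C hC hCΩ)) hK hT hA hAΩ).trans ?_
  gcongr
  norm_num
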